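/- Fix an admissible test family and equip Conf^lf_∞(ℂ) with the sum metric d_sum. Then the fundamental group π₁(Conf^lf_∞(ℂ), Ñ) is uncountable. -/

import Mathlib

open scoped Topology
open Filter

noncomputable section

/-- A subset of `ℂ` is locally finite if it meets every compact set in a finite set. -/
def LocFin (A : Set ℂ) : Prop := ∀ K : Set ℂ, IsCompact K → (A ∩ K).Finite

/-- Membership in `C^lf_∞(ℂ)`: countably infinite, locally finite subsets of `ℂ`. -/
def IsClf (A : Set ℂ) : Prop := A.Countable ∧ A.Infinite ∧ LocFin A

/-- An admissible test family `(φ_j)_{j≥1}` (indexed here by `j : ℕ`, with `φ j`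
representing `φ_{j+1}`): for every `m ≥ 1` the subfamily of those `φ_j` supported in the
closed ball `K_m` is dense, for the sup norm, in the continuous compactly supported
functions with support in `K_m`. -/
structure TestFamily where
  φ : ℕ → ℂ → ℝ
  cont : ∀ j, Continuous (φ j)
  cpt : ∀ j, HasCompactSupport (φ j)
  dense : ∀ m : ℕ, 1 ≤ m → ∀ ψ : ℂ → ℝ, Continuous ψ → HasCompactSupport ψ →
      tsupport ψ ⊆ Metric.closedBall (0 : ℂ) (m : ℝ) →
      ∀ ε : ℝ, 0 < ε → ∃ j, tsupport (φ j) ⊆ Metric.closedBall (0 : ℂ) (m : ℝ) ∧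
        ∀ z, |φ j z - ψ z| ≤ ε

/-- `S_j(A) = ∑_{a∈A} φ_j(a)` (a sum with finitely many nonzero terms). -/
def Ssum (T : TestFamily) (j : ℕ) (A : Set ℂ) : ℝ := ∑ᶠ a ∈ A, T.φ j a

/-- The vague metric `d_V(A,B) = ∑_j 2^{-j} |S_j(A)-S_j(B)| / (1+|S_j(A)-S_j(B)|)`. -/
def dV (T : TestFamily) (A B : Set ℂ) : ℝ :=
  ∑' j : ℕ, (1 / 2 : ℝ) ^ (j + 1) *
    (|Ssum T j A - Ssum T j B| / (1 + |Ssum T j A - Ssum T j B|))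

/-- Ordered locally finite infinite configurations: injective sequences in `ℂ` with only
finitely many terms in each bounded disk. -/
def IsConf (x : ℕ → ℂ) : Prop :=
  Function.Injective x ∧ ∀ R : ℝ, 0 < R → {j : ℕ | ‖x j‖ ≤ R}.Finite

/-- The product metric `d_prod(x,y) = ∑_j 2^{-j} min(|x_j - y_j|, 1)`. -/
def dProd (x y : ℕ → ℂ) : ℝ :=
  ∑' j : ℕ, (1 / 2 : ℝ) ^ (j + 1) * min ‖x j - y j‖ 1

/-- The projection `P` to the underlying unordered configuration. -/
def Pmap (x : ℕ → ℂ) : Set ℂ := Set.range x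

/-- The sum metric `d_sum(x,y) = d_prod(x,y) + d_V(P(x),P(y))`. -/
def dSum (T : TestFamily) (x y : ℕ → ℂ) : ℝ :=
  dProd x y + dV T (Pmap x) (Pmap y)

/-- The space `Conf^lf_∞(ℂ)`; the test family is carried as a (phantom) parameter so that
the metric topology of `d_sum` can be installed as a typeclass instance. -/
structure ConfSp (T : TestFamily) where
  seq : ℕ → ℂ
  prop : IsConf seq

/-- The metric topology of `d_sum`: the topology generated by its open balls. -/
instance (T : TestFamily) : TopologicalSpace (ConfSp T) :=
  TopologicalSpace.generateFrom
    {s : Set (ConfSp T) | ∃ (x : ConfSp T) (ε : ℝ), 0 < ε ∧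
      s = {y : ConfSp T | dSum T x.seq y.seq < ε}}

/-- The basepoint `Ñ = (1, 2, 3, …)`. -/
def Ntilde (T : TestFamily) : ConfSp T where
  seq := fun j => (j : ℂ) + 1
  prop := by
    constructor
    · intro a b hab
      have h : ((a : ℂ) + 1) = ((b : ℂ) + 1) := hab
      have h2 : (a : ℂ) = (b : ℂ) := by linear_combination h
      exact_mod_cast h2
    · intro R hR
      apply Set.Finite.subset (Set.finite_Iic (Nat.floor R))
      intro j hj
      simp only [Set.mem_setOf_eq] at hj
      have habs : ‖(j : ℂ) + 1‖ = (j : ℝ) + 1 := by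
        rw [show ((j : ℂ) + 1) = (((j : ℝ) + 1 : ℝ) : ℂ) by push_cast; ring]
        rw [Complex.norm_real, Real.norm_eq_abs, abs_of_nonneg (by positivity)]
      rw [habs] at hj
      have : (j : ℝ) ≤ R := by linarith
      exact Set.mem_Iic.mpr (Nat.le_floor this)

/-! ### The loops -/

/-- The rotation factor of the block `n` at time `t`. -/
def rotF (s : Set ℕ) (t : ℝ) (n : ℕ) : ℂ :=
  open Classical in if n ∈ s then Complex.exp (2 * Real.pi * t * Complex.I) else 1

/-- Signed radius of the index `i`. -/
def radF (i : ℕ) : ℂ := if i % 2 = 0 then -(1 / 2) else 1 / 2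

/-- The configuration at time `t`: the pairs `(2n, 2n+1)` with `n ∈ s` rotate
around their midpoint. -/
def loopSeq (s : Set ℕ) (t : ℝ) (i : ℕ) : ℂ :=
  ((2 * ((i / 2 : ℕ) : ℝ) + 3 / 2 : ℝ) : ℂ) + radF i * rotF s t (i / 2)

lemma norm_rotF (s : Set ℕ) (t : ℝ) (n : ℕ) : ‖rotF s t n‖ = 1 := by
  unfold rotF
  split_ifs
  · rw [show (2 * Real.pi * t * Complex.I : ℂ) = ((2 * Real.pi * t : ℝ) : ℂ) * Complex.I by
      push_cast; ring]
    exact Complex.norm_exp_ofReal_mul_I _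
  · simp

lemma norm_radF (i : ℕ) : ‖radF i‖ = 1 / 2 := by
  unfold radF
  split_ifs <;> norm_num

lemma norm_radF_rotF (s : Set ℕ) (t : ℝ) (i n : ℕ) : ‖radF i * rotF s t n‖ = 1 / 2 := by
  rw [norm_mul, norm_rotF, norm_radF, mul_one]

lemma le_norm_loopSeq (s : Set ℕ) (t : ℝ) (i : ℕ) : (i : ℝ) ≤ ‖loopSeq s t i‖ := by
  have h1 := norm_sub_le_norm_add (((2 * ((i / 2 : ℕ) : ℝ) + 3 / 2 : ℝ) : ℂ))
    (radF i * rotF s t (i / 2))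
  rw [norm_radF_rotF, Complex.norm_real, Real.norm_of_nonneg (by positivity)] at h1
  have h2 : (i : ℝ) ≤ 2 * ((i / 2 : ℕ) : ℝ) + 1 := by
    have : i ≤ 2 * (i / 2) + 1 := by omega
    exact_mod_cast this
  unfold loopSeq
  linarith

lemma loopSeq_injective (s : Set ℕ) (t : ℝ) : Function.Injective (loopSeq s t) := by
  intro i j hij
  have hblock : i / 2 = j / 2 := by
    unfold loopSeq at hij
    have h1 : (((2 * ((i / 2 : ℕ) : ℝ) + 3 / 2) - (2 * ((j / 2 : ℕ) : ℝ) + 3 / 2) : ℝ) : ℂ)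
        = radF j * rotF s t (j / 2) - radF i * rotF s t (i / 2) := by
      push_cast at hij ⊢
      linear_combination hij
    have h2 := congrArg norm h1
    have h3 := norm_sub_le (radF j * rotF s t (j / 2)) (radF i * rotF s t (i / 2))
    rw [norm_radF_rotF, norm_radF_rotF, ← h2, Complex.norm_real, Real.norm_eq_abs, abs_le] at h3
    obtain ⟨h4, h5⟩ := h3
    have h6 : ((i / 2 : ℕ) : ℝ) < ((j / 2 : ℕ) : ℝ) + 1 := by linarith
    have h7 : ((j / 2 : ℕ) : ℝ) < ((i / 2 : ℕ) : ℝ) + 1 := by linarith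
    have h8 : i / 2 < j / 2 + 1 := by exact_mod_cast h6
    have h9 : j / 2 < i / 2 + 1 := by exact_mod_cast h7
    omega
  have hrot : rotF s t (j / 2) ≠ 0 := by
    intro h
    have := norm_rotF s t (j / 2)
    rw [h] at this
    simp at this
  unfold loopSeq at hij
  rw [hblock] at hij
  have hr : radF i = radF j := mul_right_cancel₀ hrot (add_left_cancel hij)
  have hmod : i % 2 = j % 2 := by
    unfold radF at hr
    split_ifs at hr with h1 h2 h2
    · omega
    · norm_num at hr
    · norm_num at hr
    · omega
  omega

lemma loopSeq_isConf (s : Set ℕ) (t : ℝ) : IsConf (loopSeq s t) := by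
  refine ⟨loopSeq_injective s t, fun R _ => ?_⟩
  apply Set.Finite.subset (Set.finite_Iic (Nat.floor R))
  intro j hj
  exact Set.mem_Iic.mpr (Nat.le_floor ((le_norm_loopSeq s t j).trans hj))

lemma continuous_loopSeq (s : Set ℕ) (i : ℕ) : Continuous fun t : ℝ => loopSeq s t i := by
  unfold loopSeq rotF
  split_ifs <;> fun_prop

lemma loopSeq_of_rot (s : Set ℕ) (t : ℝ)
    (h : Complex.exp (2 * Real.pi * t * Complex.I) = 1) :
    loopSeq s t = fun j : ℕ => (j : ℂ) + 1 := by
  funext i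
  have h1 : rotF s t (i / 2) = 1 := by
    unfold rotF
    split_ifs
    · exact h
    · rfl
  unfold loopSeq
  rw [h1, mul_one]
  have h2 : i = 2 * (i / 2) + i % 2 := by omega
  have h3 : (i : ℂ) = 2 * ((i / 2 : ℕ) : ℂ) + ((i % 2 : ℕ) : ℂ) := by exact_mod_cast h2
  rw [h3]
  unfold radF
  rcases Nat.mod_two_eq_zero_or_one i with h4 | h4 <;> rw [h4] <;> push_cast <;> norm_num <;> ring

lemma exp_two_pi_one : Complex.exp (2 * Real.pi * ((1 : ℝ) : ℂ) * Complex.I) = 1 := by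
  simp [Complex.exp_two_pi_mul_I]

lemma continuous_Ssum_loop (T : TestFamily) (s : Set ℕ) (j : ℕ) :
    Continuous fun t : ℝ => Ssum T j (Pmap (loopSeq s t)) := by
  obtain ⟨R, hR⟩ := (T.cpt j).isCompact.isBounded.subset_closedBall (0 : ℂ)
  have key : ∀ t : ℝ, Ssum T j (Pmap (loopSeq s t))
      = ∑ i ∈ Finset.range (Nat.floor R + 1), T.φ j (loopSeq s t i) := by
    intro t
    unfold Ssum Pmap
    rw [finsum_mem_range (loopSeq_injective s t)]
    apply finsum_eq_sum_of_support_subset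
    intro i hi
    have h1 : loopSeq s t i ∈ tsupport (T.φ j) := subset_tsupport _ hi
    have h2 := hR h1
    rw [mem_closedBall_zero_iff] at h2
    have h3 : i ≤ Nat.floor R := Nat.le_floor ((le_norm_loopSeq s t i).trans h2)
    simpa using Nat.lt_succ_of_le h3
  simp_rw [key]
  exact continuous_finsetSum _ fun i _ => (T.cont j).comp (continuous_loopSeq s i)

lemma summable_half : Summable fun j : ℕ => (1 / 2 : ℝ) ^ (j + 1) :=
  (summable_nat_add_iff 1).mpr summable_geometric_two

lemma frac_le_one (a : ℝ) : |a| / (1 + |a|) ≤ 1 := by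
  rw [div_le_one (by positivity)]
  linarith

lemma continuous_dSum_loop (T : TestFamily) (s : Set ℕ) (x : ℕ → ℂ) :
    Continuous fun t : ℝ => dSum T x (loopSeq s t) := by
  unfold dSum
  refine Continuous.add ?_ ?_
  · unfold dProd
    refine continuous_tsum (u := fun j : ℕ => (1 / 2 : ℝ) ^ (j + 1)) (fun j => ?_)
      summable_half fun j t => ?_
    · have := continuous_loopSeq s j
      fun_prop
    · rw [Real.norm_of_nonneg (by positivity)]
      exact mul_le_of_le_one_right (by positivity) (min_le_right _ _)
  · unfold dV
    refine continuous_tsum (u := fun j : ℕ => (1 / 2 : ℝ) ^ (j + 1)) (fun j => ?_)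
      summable_half fun j t => ?_
    · have := continuous_Ssum_loop T s j
      refine continuous_const.mul (Continuous.div (by fun_prop) (by fun_prop) fun t => ?_)
      positivity
    · rw [Real.norm_of_nonneg (by positivity)]
      exact mul_le_of_le_one_right (by positivity) (frac_le_one _)

/-- The loop as a map to the configuration space. -/
def loopPt (T : TestFamily) (s : Set ℕ) (t : ℝ) : ConfSp T := ⟨loopSeq s t, loopSeq_isConf s t⟩

lemma continuous_loopPt (T : TestFamily) (s : Set ℕ) : Continuous (loopPt T s) := by
  refine continuous_generateFrom_iff.mpr ?_
  rintro _ ⟨x, ε, _, rfl⟩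
  exact isOpen_lt (continuous_dSum_loop T s x.seq) continuous_const

lemma loopPt_base (T : TestFamily) (s : Set ℕ) (t : ℝ)
    (h : Complex.exp (2 * Real.pi * t * Complex.I) = 1) : loopPt T s t = Ntilde T := by
  unfold loopPt Ntilde
  congr 1
  exact loopSeq_of_rot s t h

/-- The loop associated with a set of blocks. -/
def loopPath (T : TestFamily) (s : Set ℕ) : Path (Ntilde T) (Ntilde T) where
  toFun t := loopPt T s t
  continuous_toFun := (continuous_loopPt T s).comp continuous_subtype_val
  source' := loopPt_base T s _ (by simp)
  target' := loopPt_base T s _ exp_two_pi_one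

/-! ### Continuity of the coordinates -/

lemma dSum_self (T : TestFamily) (x : ℕ → ℂ) : dSum T x x = 0 := by
  simp [dSum, dProd, dV]

lemma le_dSum (T : TestFamily) (x y : ℕ → ℂ) (i : ℕ) :
    (1 / 2 : ℝ) ^ (i + 1) * min ‖x i - y i‖ 1 ≤ dSum T x y := by
  have h1 : 0 ≤ dV T (Pmap x) (Pmap y) := tsum_nonneg fun j => by positivity
  have h2 : Summable fun j : ℕ => (1 / 2 : ℝ) ^ (j + 1) * min ‖x j - y j‖ 1 :=
    Summable.of_nonneg_of_le (fun j => by positivity)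
      (fun j => mul_le_of_le_one_right (by positivity) (min_le_right _ _)) summable_half
  have h3 := h2.le_tsum i fun j _ => by positivity
  unfold dSum dProd
  linarith

lemma continuous_coord (T : TestFamily) (i : ℕ) : Continuous fun x : ConfSp T => x.seq i := by
  rw [continuous_iff_continuousAt]
  intro x
  rw [ContinuousAt, Metric.tendsto_nhds]
  intro ε hε
  have hopen : IsOpen {y : ConfSp T | dSum T x.seq y.seq < (1 / 2 : ℝ) ^ (i + 1) * min ε 1} :=
    TopologicalSpace.isOpen_generateFrom_of_mem ⟨x, _, by positivity, rfl⟩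
  have hmem : x ∈ {y : ConfSp T | dSum T x.seq y.seq < (1 / 2 : ℝ) ^ (i + 1) * min ε 1} := by
    simp only [Set.mem_setOf_eq, dSum_self]
    positivity
  filter_upwards [hopen.mem_nhds hmem] with y hy
  have h1 := (le_dSum T x.seq y.seq i).trans_lt hy
  have h2 : min ‖x.seq i - y.seq i‖ 1 < min ε 1 := lt_of_mul_lt_mul_left h1 (by positivity)
  rw [dist_comm, dist_eq_norm]
  rcases lt_min_iff.mp h2 with ⟨h3, h4⟩
  rcases min_lt_iff.mp h3 with h5 | h5
  · exact h5
  · rcases min_lt_iff.mp h4 with h6 | h6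
    · linarith
    · exact absurd h6 (lt_irrefl _)

/-- The difference of the two points of the block `n`. -/
def blockDiff (T : TestFamily) (n : ℕ) : C(ConfSp T, {z : ℂ // z ≠ 0}) where
  toFun x := ⟨x.seq (2 * n + 1) - x.seq (2 * n), by
    intro h
    have := x.prop.1 (sub_eq_zero.mp h)
    omega⟩
  continuous_toFun :=
    ((continuous_coord T (2 * n + 1)).sub (continuous_coord T (2 * n))).subtype_mk _

lemma loopSeq_diff (s : Set ℕ) (t : ℝ) (n : ℕ) :
    loopSeq s t (2 * n + 1) - loopSeq s t (2 * n) = rotF s t n := by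
  unfold loopSeq radF
  have h1 : (2 * n + 1) / 2 = n := by omega
  have h2 : 2 * n / 2 = n := by omega
  have h3 : ¬ (2 * n + 1) % 2 = 0 := by omega
  have h4 : 2 * n % 2 = 0 := by omega
  rw [h1, h2, if_neg h3, if_pos h4]
  ring

lemma mem_of_homotopic (T : TestFamily) (s s' : Set ℕ)
    (h : (loopPath T s).Homotopic (loopPath T s')) (n : ℕ) (hn : n ∈ s) : n ∈ s' := by
  by_contra hn'
  have h1 : ((blockDiff T n).comp (loopPath T s).toContinuousMap).HomotopicRel
      ((blockDiff T n).comp (loopPath T s').toContinuousMap) {0, 1} :=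
    Nonempty.map (fun H => ContinuousMap.HomotopyRel.compContinuousMap H (blockDiff T n)) h
  have cov := Complex.isCoveringMap_exp
  have e0 : ∀ u : Set ℕ, ((blockDiff T n).comp (loopPath T u).toContinuousMap) 0
      = ⟨_, Complex.exp_ne_zero 0⟩ := by
    intro u
    apply Subtype.ext
    change loopSeq u ((0 : unitInterval) : ℝ) (2 * n + 1) - loopSeq u ((0 : unitInterval) : ℝ) (2 * n) = _
    rw [loopSeq_diff]
    simp [rotF]
  have h2 := cov.liftPath_apply_one_eq_of_homotopicRel h1 0 (e0 s) (e0 s')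
  have l1 := (cov.eq_liftPath_iff (e0 s)
    (Γ := fun t => 2 * Real.pi * ((t : ℝ) : ℂ) * Complex.I)).mpr
    ⟨by fun_prop, by
      funext t
      apply Subtype.ext
      change _ = loopSeq s (t : ℝ) (2 * n + 1) - loopSeq s (t : ℝ) (2 * n)
      rw [loopSeq_diff]
      simp [rotF, hn], by simp⟩
  have l2 := (cov.eq_liftPath_iff (e0 s') (Γ := fun _ => 0)).mpr
    ⟨by fun_prop, by
      funext t
      apply Subtype.ext
      change _ = loopSeq s' (t : ℝ) (2 * n + 1) - loopSeq s' (t : ℝ) (2 * n)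
      rw [loopSeq_diff]
      simp [rotF, hn'], rfl⟩
  rw [← congrFun l1 1, ← congrFun l2 1] at h2
  simp [Real.pi_ne_zero] at h2

/-- The fundamental group `π₁(Conf^lf_∞(ℂ), Ñ)` is uncountable. -/
theorem fundamentalGroup_uncountable (T : TestFamily) :
    ¬ Countable (FundamentalGroup (ConfSp T) (Ntilde T)) := by
  intro hc
  let F : Set ℕ → FundamentalGroup (ConfSp T) (Ntilde T) := fun s =>
    FundamentalGroup.fromPath (Path.Homotopic.Quotient.mk (loopPath T s))
  have hF : Function.Injective F := by
    intro s s' h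
    have h1 : (loopPath T s).Homotopic (loopPath T s') := Path.Homotopic.Quotient.exact h
    ext n
    exact ⟨mem_of_homotopic T s s' h1 n, mem_of_homotopic T s' s h1.symm n⟩
  have hS : Countable (Set ℕ) := hF.countable
  obtain ⟨f, hf⟩ := hS.exists_injective_nat
  exact Function.cantor_injective f hf
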